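/- Suppose Fix(P_S ∘ T) ≠ ∅. Let γ ∈ (0,1) and y₀ ∈ S, and define the under-relaxed iteration y_{n+1} = (1−γ)·P_S(T y_n) + γ·y_n. Then the sequence (y_n) converges in norm to some point y ∈ Fix(P_S ∘ T). -/

import Mathlib

/-!
Write `N z = z - T z`. Homogeneity of `κ` forces `κ (T z) ≤ ‖N z‖`, so `‖N z‖` is the optimal value
of the problem defining `T z`, and uniqueness of the minimizer makes `T z` behave like the projection
of `z` onto the sublevel set `{κ ≤ ‖N z‖}`: `⟪N z, v - T z⟫ ≤ 0` for each `v` in that set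
(`polarProx_variational`).

If `p` is a fixed point of `P_S ∘ T`, then `N p = (0, d)` is vertical, and the variational inequality
at `p` shows that `p` minimizes `‖N ·‖` over `S` (`norm_residual_fixed_le`). Hence
`κ (T p) ≤ |d| ≤ ‖N z‖` for `z ∈ S`, and the variational inequality at `z` with `v = T p` reads
`⟪N z, z - p⟫ ≥ ‖N z‖² - d * N_v`, where `N_v` is the vertical part of `N z` and `N_X` its
horizontal part. Therefore
`‖z - p‖² - ‖P_S (T z) - p‖² = 2⟪N z, z - p⟫ - ‖N_X‖² ≥ ‖N z‖² + N_v² - 2 d N_v ≥ 0`,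
so `P_S ∘ T` is quasi-nonexpansive on `S` (`quasiNonexpansive`).

The conclusion follows as for Krasnoselskii–Mann iterations: the sequence is Fejér monotone with
respect to the fixed points, the residuals `P_S (T y_n) - y_n` tend to zero, and the graph of `T` is
closed (`polarProx_closed`), so that every cluster point is a fixed point.
-/

open scoped ENNReal RealInnerProductSpace Pointwise Topology
open Filter

noncomputable section

variable {X : Type*} [NormedAddCommGroup X] [InnerProductSpace ℝ X] [FiniteDimensional ℝ X]

/-- The point `(x, t)` of the lifted space `E = X ×₂ ℝ` (Euclidean product). -/
def pt (x : X) (t : ℝ) : WithLp 2 (X × ℝ) := (WithLp.equiv 2 (X × ℝ)).symm (x, t)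

/-- First (`X`-) coordinate of a point of the lifted space. -/
def fstE (z : WithLp 2 (X × ℝ)) : X := (WithLp.equiv 2 (X × ℝ) z).1

/-- Second (`ℝ`-) coordinate of a point of the lifted space. -/
def sndE (z : WithLp 2 (X × ℝ)) : ℝ := (WithLp.equiv 2 (X × ℝ) z).2

/-- Orthogonal projection `P_S` onto the affine subspace `S = X × {1}`. -/
def PS (z : WithLp 2 (X × ℝ)) : WithLp 2 (X × ℝ) := pt (fstE z) 1

/-- A closed gauge: a convex, lower semicontinuous, positively homogeneous
function `κ : E → [0,∞]` on the lifted space. -/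
def IsClosedGauge (κ : WithLp 2 (X × ℝ) → ℝ≥0∞) : Prop :=
  LowerSemicontinuous κ ∧
  (∀ z w : WithLp 2 (X × ℝ), ∀ a b : ℝ, 0 ≤ a → 0 ≤ b → a + b = 1 →
    κ (a • z + b • w) ≤ ENNReal.ofReal a * κ z + ENNReal.ofReal b * κ w) ∧
  (∀ t : ℝ, 0 ≤ t → ∀ z, κ (t • z) = ENNReal.ofReal t * κ z)

/-- The objective `u ↦ max {κ(u), ‖z − u‖}` defining the polar proximal map. -/
def polarObj (κ : WithLp 2 (X × ℝ) → ℝ≥0∞) (z u : WithLp 2 (X × ℝ)) : ℝ≥0∞ :=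
  max (κ u) (ENNReal.ofReal ‖z - u‖)

/-- `T` is the polar proximal map of `κ`: for every `z`, `T z` is the unique
minimizer of `u ↦ max {κ(u), ‖z − u‖}`. -/
def IsPolarProx (κ : WithLp 2 (X × ℝ) → ℝ≥0∞)
    (T : WithLp 2 (X × ℝ) → WithLp 2 (X × ℝ)) : Prop :=
  ∀ z, (∀ u, polarObj κ z (T z) ≤ polarObj κ z u) ∧
    (∀ u, (∀ v, polarObj κ z u ≤ polarObj κ z v) → u = T z)

set_option linter.unusedSectionVars false

lemma inner_eq_coords (a b : WithLp 2 (X × ℝ)) :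
    ⟪a, b⟫ = ⟪fstE a, fstE b⟫ + sndE a * sndE b := by
  rw [WithLp.prod_inner_apply]
  simp [fstE, sndE, mul_comm]

lemma norm_sq_eq_coords (a : WithLp 2 (X × ℝ)) :
    ‖a‖ ^ 2 = ‖fstE a‖ ^ 2 + sndE a ^ 2 := by
  rw [← real_inner_self_eq_norm_sq, inner_eq_coords, real_inner_self_eq_norm_sq]; ring

lemma fstE_sub (a b : WithLp 2 (X × ℝ)) : fstE (a - b) = fstE a - fstE b := rfl

lemma sndE_sub (a b : WithLp 2 (X × ℝ)) : sndE (a - b) = sndE a - sndE b := rfl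

lemma fstE_PS (a : WithLp 2 (X × ℝ)) : fstE (PS a) = fstE a := rfl

lemma sndE_PS (a : WithLp 2 (X × ℝ)) : sndE (PS a) = 1 := rfl

lemma continuous_PS : Continuous (PS : WithLp 2 (X × ℝ) → WithLp 2 (X × ℝ)) := by
  have h : Continuous fun z : WithLp 2 (X × ℝ) => ((WithLp.ofLp z).1, (1 : ℝ)) :=
    (continuous_fst.comp (WithLp.prod_continuous_ofLp 2 X ℝ)).prodMk continuous_const
  exact (WithLp.prod_continuous_toLp 2 X ℝ).comp h

/-- The optimal value of the polar proximal problem is attained by the distance term: otherwise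
shrinking `T z` slightly towards the origin would lower both terms. -/
lemma gauge_polarProx_le {κ : WithLp 2 (X × ℝ) → ℝ≥0∞} (hκ : IsClosedGauge κ)
    {T : WithLp 2 (X × ℝ) → WithLp 2 (X × ℝ)} (hT : IsPolarProx κ T) (z : WithLp 2 (X × ℝ)) :
    κ (T z) ≤ ENNReal.ofReal ‖z - T z‖ := by
  obtain ⟨-, -, hhom⟩ := hκ
  have hmin := (hT z).1
  by_contra! hlt
  have h0 : κ 0 = 0 := by simpa using hhom 0 le_rfl 0
  have hfin : κ (T z) ≠ ⊤ := by
    have h := (le_max_left _ _).trans (hmin 0)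
    refine ne_top_of_le_ne_top ?_ h
    simp [polarObj, h0]
  have hpos : κ (T z) ≠ 0 := (bot_le.trans_lt hlt).ne'
  have hcont : Tendsto (fun s : ℝ => ENNReal.ofReal ‖z - s • T z‖) (𝓝[<] 1)
      (𝓝 (ENNReal.ofReal ‖z - T z‖)) := by
    have : Continuous fun s : ℝ => ENNReal.ofReal ‖z - s • T z‖ :=
      ENNReal.continuous_ofReal.comp (by fun_prop)
    simpa using (this.tendsto 1).mono_left nhdsWithin_le_nhds
  have hev := hcont.eventually (gt_mem_nhds hlt)
  have hI : ∀ᶠ s : ℝ in 𝓝[<] 1, s ∈ Set.Ioo (0 : ℝ) 1 := Ioo_mem_nhdsLT one_pos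
  obtain ⟨s, hs, hs0, hs1⟩ := (hev.and hI).exists
  have h1 : κ (s • T z) < κ (T z) := by
    rw [hhom s hs0.le]
    calc ENNReal.ofReal s * κ (T z) < 1 * κ (T z) := by
          refine ENNReal.mul_lt_mul_left hpos hfin ?_
          simpa using hs1
      _ = κ (T z) := one_mul _
  have h2 : κ (T z) ≤ polarObj κ z (s • T z) := (le_max_left _ _).trans (hmin _)
  exact absurd h2 (not_le.2 (max_lt h1 hs))

lemma residual_le_polarObj {κ : WithLp 2 (X × ℝ) → ℝ≥0∞}
    {T : WithLp 2 (X × ℝ) → WithLp 2 (X × ℝ)} (hT : IsPolarProx κ T) (z v : WithLp 2 (X × ℝ)) :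
    ENNReal.ofReal ‖z - T z‖ ≤ polarObj κ z v :=
  (le_max_right _ _).trans ((hT z).1 v)

lemma eq_polarProx {κ : WithLp 2 (X × ℝ) → ℝ≥0∞}
    {T : WithLp 2 (X × ℝ) → WithLp 2 (X × ℝ)} (hT : IsPolarProx κ T) {z u : WithLp 2 (X × ℝ)}
    (h1 : κ u ≤ ENNReal.ofReal ‖z - T z‖) (h2 : ‖z - u‖ ≤ ‖z - T z‖) : u = T z :=
  (hT z).2 u fun v =>
    (max_le h1 (ENNReal.ofReal_le_ofReal h2)).trans (residual_le_polarObj hT z v)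

/-- The obtuse-angle characterization of `T z` as the projection of `z` onto the sublevel set of `κ`
at height `‖z - T z‖`. -/
lemma polarProx_variational {κ : WithLp 2 (X × ℝ) → ℝ≥0∞} (hκ : IsClosedGauge κ)
    {T : WithLp 2 (X × ℝ) → WithLp 2 (X × ℝ)} (hT : IsPolarProx κ T) (z v : WithLp 2 (X × ℝ))
    (hv : κ v ≤ ENNReal.ofReal ‖z - T z‖) : ⟪z - T z, v - T z⟫ ≤ 0 := by
  have hTz := gauge_polarProx_le hκ hT z
  set S : Set (WithLp 2 (X × ℝ)) := {u | κ u ≤ ENNReal.ofReal ‖z - T z‖}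
  have hconv : Convex ℝ S := by
    intro a ha b hb s t hs ht hst
    refine (hκ.2.1 a b s t hs ht hst).trans ?_
    calc ENNReal.ofReal s * κ a + ENNReal.ofReal t * κ b
        ≤ ENNReal.ofReal s * ENNReal.ofReal ‖z - T z‖
          + ENNReal.ofReal t * ENNReal.ofReal ‖z - T z‖ := by gcongr <;> assumption
      _ = ENNReal.ofReal ‖z - T z‖ := by
          rw [← add_mul, ← ENNReal.ofReal_add hs ht, hst]; simp
  have hinf : ‖z - T z‖ = ⨅ w : S, ‖z - w‖ := by
    have : Nonempty S := ⟨⟨T z, hTz⟩⟩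
    apply le_antisymm
    · refine le_ciInf fun w => ?_
      by_contra! hlt
      -- A strictly closer point of the sublevel set would be a second minimizer.
      have := eq_polarProx hT w.2 hlt.le
      rw [this] at hlt
      exact lt_irrefl _ hlt
    · exact ciInf_le (f := fun w : S => ‖z - w‖)
        ⟨0, by rintro _ ⟨w, rfl⟩; exact norm_nonneg _⟩ ⟨T z, hTz⟩
  exact (norm_eq_iInf_iff_real_inner_le_zero hconv hTz).1 hinf v hv

lemma sndE_of_fixed {T : WithLp 2 (X × ℝ) → WithLp 2 (X × ℝ)} {p : WithLp 2 (X × ℝ)}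
    (hp : PS (T p) = p) : sndE p = 1 := by rw [← hp, sndE_PS]

lemma fstE_residual_of_fixed {T : WithLp 2 (X × ℝ) → WithLp 2 (X × ℝ)} {p : WithLp 2 (X × ℝ)}
    (hp : PS (T p) = p) : fstE (p - T p) = 0 := by
  have : fstE (T p) = fstE p := by conv_rhs => rw [← hp, fstE_PS]
  rw [fstE_sub, this, sub_self]

lemma abs_sndE_residual_of_fixed {T : WithLp 2 (X × ℝ) → WithLp 2 (X × ℝ)}
    {p : WithLp 2 (X × ℝ)} (hp : PS (T p) = p) : |sndE (p - T p)| = ‖p - T p‖ := by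
  have h := norm_sq_eq_coords (p - T p)
  rw [fstE_residual_of_fixed hp, norm_zero] at h
  rw [← abs_of_nonneg (norm_nonneg (p - T p)), ← sq_eq_sq_iff_abs_eq_abs, h]; ring

/-- A fixed point of `P_S ∘ T` minimizes the optimal value of the polar proximal problem over `S`. -/
lemma norm_residual_fixed_le {κ : WithLp 2 (X × ℝ) → ℝ≥0∞} (hκ : IsClosedGauge κ)
    {T : WithLp 2 (X × ℝ) → WithLp 2 (X × ℝ)} (hT : IsPolarProx κ T) {p z : WithLp 2 (X × ℝ)}
    (hp : PS (T p) = p) (hz : sndE z = 1) : ‖p - T p‖ ≤ ‖z - T z‖ := by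
  by_contra! hlt
  have hv := polarProx_variational hκ hT p (T z)
    ((gauge_polarProx_le hκ hT z).trans (ENNReal.ofReal_le_ofReal hlt.le))
  rw [inner_eq_coords, fstE_residual_of_fixed hp, inner_zero_left, zero_add] at hv
  have hd := abs_sndE_residual_of_fixed hp
  have hn := norm_sq_eq_coords (z - T z)
  have hN : |sndE (z - T z)| ≤ ‖z - T z‖ :=
    abs_le_of_sq_le_sq (by nlinarith [sq_nonneg ‖fstE (z - T z)‖]) (norm_nonneg _)
  have he : sndE (T z - T p) = sndE (p - T p) - sndE (z - T z) := by
    simp only [sndE_sub, hz, sndE_of_fixed hp]; ring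
  rw [he] at hv
  have h1 : sndE (p - T p) * sndE (z - T z) ≤ |sndE (p - T p)| * |sndE (z - T z)| := by
    rw [← abs_mul]; exact le_abs_self _
  have h2 := sq_abs (sndE (p - T p))
  have h3 : 0 < ‖p - T p‖ := (norm_nonneg _).trans_lt hlt
  rw [hd] at h1 h2
  nlinarith

/-- `P_S ∘ T` is quasi-nonexpansive on `S`. -/
lemma quasiNonexpansive {κ : WithLp 2 (X × ℝ) → ℝ≥0∞} (hκ : IsClosedGauge κ)
    {T : WithLp 2 (X × ℝ) → WithLp 2 (X × ℝ)} (hT : IsPolarProx κ T) {p z : WithLp 2 (X × ℝ)}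
    (hp : PS (T p) = p) (hz : sndE z = 1) : ‖PS (T z) - p‖ ^ 2 ≤ ‖z - p‖ ^ 2 := by
  have hle := norm_residual_fixed_le hκ hT hp hz
  have hv := polarProx_variational hκ hT z (T p)
    ((gauge_polarProx_le hκ hT p).trans (ENNReal.ofReal_le_ofReal hle))
  have hd := abs_sndE_residual_of_fixed hp
  have hn := norm_sq_eq_coords (z - T z)
  have hf : fstE (T p - T z) = fstE (z - T z) - fstE (z - p) := by
    have := fstE_residual_of_fixed hp
    rw [fstE_sub, sub_eq_zero] at this
    simp only [fstE_sub, ← this]; abel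
  have hs : sndE (T p - T z) = sndE (z - T z) - sndE (p - T p) := by
    simp only [sndE_sub, hz, sndE_of_fixed hp]; ring
  have hf' : fstE (PS (T z) - p) = fstE (z - p) - fstE (z - T z) := by
    simp only [fstE_sub, fstE_PS]; abel
  have hs' : sndE (PS (T z) - p) = 0 := by
    simp only [sndE_sub, sndE_PS, sndE_of_fixed hp]; ring
  have hs'' : sndE (z - p) = 0 := by
    simp only [sndE_sub, hz, sndE_of_fixed hp]; ring
  rw [inner_eq_coords, hf, hs, inner_sub_right, real_inner_self_eq_norm_sq] at hv
  rw [norm_sq_eq_coords, norm_sq_eq_coords (z - p), hf', hs', hs'', norm_sub_sq_real,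
    real_inner_comm]
  have hd2 : sndE (p - T p) ^ 2 ≤ ‖z - T z‖ ^ 2 := by
    rw [← sq_abs, hd]; gcongr
  nlinarith [sq_nonneg (sndE (z - T z) - sndE (p - T p))]

/-- The graph of `T` is sequentially closed. -/
lemma polarProx_closed {κ : WithLp 2 (X × ℝ) → ℝ≥0∞} (hκ : IsClosedGauge κ)
    {T : WithLp 2 (X × ℝ) → WithLp 2 (X × ℝ)} (hT : IsPolarProx κ T) {w : ℕ → WithLp 2 (X × ℝ)}
    {q u : WithLp 2 (X × ℝ)} (hw : Tendsto w atTop (𝓝 q))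
    (hTw : Tendsto (fun n => T (w n)) atTop (𝓝 u)) : u = T q := by
  have hr : Tendsto (fun n => ENNReal.ofReal ‖w n - T (w n)‖) atTop
      (𝓝 (ENNReal.ofReal ‖q - u‖)) := ENNReal.tendsto_ofReal (hw.sub hTw).norm
  have hκu : κ u ≤ ENNReal.ofReal ‖q - u‖ :=
    hκ.1.isClosed_epigraph.mem_of_tendsto (hTw.prodMk_nhds hr)
      (Eventually.of_forall fun n => gauge_polarProx_le hκ hT (w n))
  refine (hT q).2 u fun v => ?_
  have hlim : Tendsto (fun n => polarObj κ (w n) v) atTop (𝓝 (polarObj κ q v)) :=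
    tendsto_const_nhds.max (ENNReal.tendsto_ofReal (hw.sub_const v).norm)
  exact (max_le hκu le_rfl).trans
    (le_of_tendsto_of_tendsto' hr hlim fun n => residual_le_polarObj hT (w n) v)

lemma norm_sq_relaxed (a b : WithLp 2 (X × ℝ)) (γ : ℝ) :
    ‖(1 - γ) • a + γ • b‖ ^ 2
      = (1 - γ) * ‖a‖ ^ 2 + γ * ‖b‖ ^ 2 - γ * (1 - γ) * ‖a - b‖ ^ 2 := by
  rw [norm_add_sq_real, norm_sub_sq_real, norm_smul, norm_smul, mul_pow, mul_pow,
    real_inner_smul_left, real_inner_smul_right, Real.norm_eq_abs, Real.norm_eq_abs, sq_abs, sq_abs]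
  ring

/-- If `Fix (P_S ∘ T) ≠ ∅`, `γ ∈ (0,1)`, `y₀ ∈ S`, the under-relaxed
iteration `y_{n+1} = (1−γ) P_S (T y_n) + γ y_n` converges in norm to a point of
`Fix (P_S ∘ T)`. -/
theorem underRelaxed_GP4A_converges
    (κ : WithLp 2 (X × ℝ) → ℝ≥0∞) (hκ : IsClosedGauge κ)
    (T : WithLp 2 (X × ℝ) → WithLp 2 (X × ℝ)) (hT : IsPolarProx κ T)
    (hne : ∃ z, PS (T z) = z)
    (γ : ℝ) (hγ0 : 0 < γ) (hγ1 : γ < 1)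
    (y : ℕ → WithLp 2 (X × ℝ)) (hy0 : sndE (y 0) = 1)
    (hrec : ∀ n, y (n + 1) = (1 - γ) • PS (T (y n)) + γ • y n) :
    ∃ ylim : WithLp 2 (X × ℝ), PS (T ylim) = ylim ∧ Tendsto y atTop (𝓝 ylim) := by
  have hS : ∀ n, sndE (y n) = 1 := by
    intro n
    induction n with
    | zero => exact hy0
    | succ k ih =>
      have h : sndE (y (k + 1)) = (1 - γ) * sndE (PS (T (y k))) + γ * sndE (y k) := by
        rw [hrec]; rfl
      rw [h, ih, sndE_PS]; ring
  have hstep : ∀ p, PS (T p) = p → ∀ n, ‖y (n + 1) - p‖ ^ 2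
      ≤ ‖y n - p‖ ^ 2 - γ * (1 - γ) * ‖PS (T (y n)) - y n‖ ^ 2 := by
    intro p hp n
    have he : y (n + 1) - p = (1 - γ) • (PS (T (y n)) - p) + γ • (y n - p) := by
      rw [hrec]; module
    rw [he, norm_sq_relaxed, sub_sub_sub_cancel_right]
    have := quasiNonexpansive hκ hT hp (hS n)
    nlinarith
  have hγ : 0 < γ * (1 - γ) := mul_pos hγ0 (by linarith)
  have hanti : ∀ p, PS (T p) = p → Antitone fun n => ‖y n - p‖ ^ 2 := fun p hp =>
    antitone_nat_of_succ_le fun n => (hstep p hp n).trans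
      (sub_le_self _ (mul_nonneg hγ.le (sq_nonneg _)))
  have hbound : ∀ p, PS (T p) = p → ∀ m n, m ≤ n → ‖y n - p‖ ≤ ‖y m - p‖ := fun p hp m n hmn =>
    (pow_le_pow_iff_left₀ (norm_nonneg _) (norm_nonneg _) two_ne_zero).1 (hanti p hp hmn)
  obtain ⟨p, hp⟩ := hne
  have hres : Tendsto (fun n => PS (T (y n)) - y n) atTop (𝓝 0) := by
    have hl := tendsto_atTop_ciInf (hanti p hp)
      ⟨0, by rintro _ ⟨n, rfl⟩; exact sq_nonneg _⟩
    have hdiff := (hl.sub (hl.comp (tendsto_add_atTop_nat 1))).const_mul (γ * (1 - γ))⁻¹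
    rw [sub_self, mul_zero] at hdiff
    have hsq : Tendsto (fun n => ‖PS (T (y n)) - y n‖ ^ 2) atTop (𝓝 0) := by
      refine squeeze_zero (fun n => sq_nonneg _) (fun n => ?_) hdiff
      rw [le_inv_mul_iff₀ hγ]
      have := hstep p hp n
      simp only [Function.comp]
      linarith
    rw [tendsto_zero_iff_norm_tendsto_zero]
    simpa [Real.sqrt_sq] using hsq.sqrt
  have : ProperSpace (WithLp 2 (X × ℝ)) := FiniteDimensional.proper ℝ _
  obtain ⟨q, -, φ, hφ, hq⟩ := tendsto_subseq_of_bounded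
    (Metric.isBounded_closedBall (x := p) (r := ‖y 0 - p‖)) (x := y)
    fun n => by rw [Metric.mem_closedBall, dist_eq_norm]; exact hbound p hp 0 n (Nat.zero_le n)
  -- The points `T (y n)` stay bounded because `‖z - T z‖` is at most the objective at the origin.
  have hTle : ∀ z, ‖z - T z‖ ≤ ‖z‖ := by
    intro z
    have h0 : κ 0 = 0 := by simpa using hκ.2.2 0 le_rfl 0
    have := residual_le_polarObj hT z 0
    rw [polarObj, h0, sub_zero, max_eq_right zero_le] at this
    exact (ENNReal.ofReal_le_ofReal_iff (norm_nonneg _)).1 this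
  obtain ⟨u, -, ψ, hψ, hu⟩ := tendsto_subseq_of_bounded
    (Metric.isBounded_closedBall (x := 0) (r := 2 * (‖y 0 - p‖ + ‖p‖))) (x := fun n => T (y (φ n)))
    fun n => by
      rw [Metric.mem_closedBall, dist_zero_right]
      have h1 := hbound p hp 0 (φ n) (Nat.zero_le _)
      have h2 := hTle (y (φ n))
      have h3 : ‖y (φ n)‖ ≤ ‖y (φ n) - p‖ + ‖p‖ := by
        simpa using norm_add_le (y (φ n) - p) p
      have h4 : ‖T (y (φ n))‖ ≤ ‖y (φ n)‖ + ‖y (φ n) - T (y (φ n))‖ := by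
        simpa using norm_sub_le (y (φ n)) (y (φ n) - T (y (φ n)))
      linarith
  have hq' : Tendsto (fun n => y (φ (ψ n))) atTop (𝓝 q) := hq.comp hψ.tendsto_atTop
  have huq : u = T q := polarProx_closed hκ hT hq' hu
  have hfix : PS (T q) = q := by
    have h1 : Tendsto (fun n => PS (T (y (φ (ψ n))))) atTop (𝓝 (PS u)) :=
      (continuous_PS.tendsto u).comp hu
    have h2 : Tendsto (fun n => PS (T (y (φ (ψ n))))) atTop (𝓝 q) := by
      have := (hres.comp (hφ.tendsto_atTop.comp hψ.tendsto_atTop)).add hq'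
      simpa using this
    rw [← huq]
    exact tendsto_nhds_unique h1 h2
  refine ⟨q, hfix, ?_⟩
  -- Fejér monotonicity upgrades convergence along a subsequence to convergence.
  rw [Metric.tendsto_atTop]
  intro ε hε
  obtain ⟨N, hN⟩ := Metric.tendsto_atTop.1 hq ε hε
  refine ⟨φ N, fun n hn => ?_⟩
  have := hN N le_rfl
  rw [Function.comp, dist_eq_norm] at this
  rw [dist_eq_norm]
  exact (hbound q hfix _ _ hn).trans_lt this
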